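/- Let 𝒜 ⊆ S^n be any (possibly infinite) set of symmetric matrices and let F be a face of S^n_+ such that J_+(𝒜) ⊆ F. Assume that for every A, A' ∈ 𝒜, either F ∩ J_0(A) ⊆ F ∩ J_+(A') or F ∩ J_+(A') ⊆ F ∩ J_+(A). Then J_+(𝒜) is ROG, i.e., J_+(𝒜) equals the convex hull of Γ^n ∩ J_+(𝒜). -/

import Mathlib

open Matrix

noncomputable section

/-- `J_+(𝒜)` : the PSD matrices `X` with `⟨A,X⟩ ≥ 0` for all `A ∈ 𝒜`. -/
def Jplus {n : ℕ} (𝒜 : Set (Matrix (Fin n) (Fin n) ℝ)) : Set (Matrix (Fin n) (Fin n) ℝ) :=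
  {X | X.PosSemidef ∧ ∀ A ∈ 𝒜, 0 ≤ (A * X).trace}

open scoped Classical in
/-- Moving from a feasible point in a direction that vanishes on the active constraints, either the
direction itself is feasible or some further constraint becomes active. -/
theorem exists_pos_step_card_filter_lt {ι : Type*} (B : Finset ι) (a d : ι → ℝ)
    (ha : ∀ i ∈ B, 0 ≤ a i) (had : ∀ i ∈ B, a i = 0 → d i = 0) :
    (∀ i ∈ B, 0 ≤ d i) ∨ ∃ s : ℝ, 0 < s ∧ (∀ i ∈ B, 0 ≤ a i + s * d i) ∧
      (B.filter fun i => a i + s * d i ≠ 0).card < (B.filter fun i => a i ≠ 0).card := by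
  by_cases h : ∀ i ∈ B, 0 ≤ d i
  · exact Or.inl h
  right
  push Not at h
  obtain ⟨j, hjB, hj⟩ := h
  obtain ⟨i, hi, hmin⟩ := (B.filter fun i => d i < 0).exists_min_image (fun i => a i / (-d i))
    ⟨j, by simp [hjB, hj]⟩
  rw [Finset.mem_filter] at hi
  obtain ⟨hiB, hdi⟩ := hi
  have hai : 0 < a i := lt_of_le_of_ne (ha i hiB) fun h0 => by
    have := had i hiB h0.symm
    linarith
  have hs : 0 < a i / (-d i) := div_pos hai (by linarith)
  have hzero : a i + a i / (-d i) * d i = 0 := by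
    have : d i ≠ 0 := hdi.ne
    field_simp
    ring
  refine ⟨a i / (-d i), hs, fun l hl => ?_, Finset.card_lt_card ?_⟩
  · rcases lt_or_ge (d l) 0 with hdl | hdl
    · have h1 := hmin l (by simp [hl, hdl])
      rw [le_div_iff₀ (by linarith)] at h1
      linarith
    · have := ha l hl
      positivity
  · rw [Finset.ssubset_iff_of_subset]
    · exact ⟨i, by simp [hiB, hai.ne'], by simp [hzero]⟩
    · intro l hl
      simp only [Finset.mem_filter] at hl ⊢
      refine ⟨hl.1, fun h0 => hl.2 ?_⟩
      rw [h0, had l hl.1 h0]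
      ring

section ConvexHullOfCone

open scoped Pointwise

variable {E : Type*} [AddCommGroup E] [Module ℝ E] {S : Set E}

theorem smul_mem_convexHull_of_cone (hS : ∀ c : ℝ, 0 ≤ c → ∀ x ∈ S, c • x ∈ S) {c : ℝ}
    (hc : 0 ≤ c) {x : E} (hx : x ∈ convexHull ℝ S) : c • x ∈ convexHull ℝ S := by
  have h : c • x ∈ convexHull ℝ (c • S) := by
    rw [convexHull_smul]
    exact Set.smul_mem_smul_set hx
  refine convexHull_mono ?_ h
  rintro _ ⟨y, hy, rfl⟩
  exact hS c hc y hy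

theorem add_mem_convexHull_of_cone (hS : ∀ c : ℝ, 0 ≤ c → ∀ x ∈ S, c • x ∈ S) {x y : E}
    (hx : x ∈ convexHull ℝ S) (hy : y ∈ convexHull ℝ S) : x + y ∈ convexHull ℝ S := by
  have h := smul_mem_convexHull_of_cone hS (zero_le_two) ((convex_convexHull ℝ S) hx hy
    (by norm_num : (0 : ℝ) ≤ 1 / 2) (by norm_num : (0 : ℝ) ≤ 1 / 2) (by norm_num))
  simpa [smul_smul] using h

end ConvexHullOfCone

section RankOne

variable {n : ℕ}

theorem vecMulVec_self_smul (c : ℝ) (x : Fin n → ℝ) :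
    vecMulVec (c • x) (c • x) = (c ^ 2) • vecMulVec x x := by
  ext i j
  simp [vecMulVec_apply]
  ring

theorem posSemidef_vecMulVec_self (x : Fin n → ℝ) : (vecMulVec x x).PosSemidef := by
  simpa using posSemidef_vecMulVec_self_star x

theorem exists_vecMulVec_self_eq_smul {c : ℝ} (hc : 0 ≤ c) (x : Fin n → ℝ) :
    ∃ y : Fin n → ℝ, c • vecMulVec x x = vecMulVec y y :=
  ⟨√c • x, by rw [vecMulVec_self_smul, Real.sq_sqrt hc]⟩

theorem continuous_vecMulVec_self : Continuous fun x : Fin n → ℝ => vecMulVec x x :=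
  continuous_matrix fun i j => by simp only [vecMulVec_apply]; fun_prop

/-- The sum `∑ x xᵀ` over a multiset of vectors `x`. -/
def gramSum (m : Multiset (Fin n → ℝ)) : Matrix (Fin n) (Fin n) ℝ :=
  (m.map fun x => vecMulVec x x).sum

theorem gramSum_cons (x : Fin n → ℝ) (m : Multiset (Fin n → ℝ)) :
    gramSum (x ::ₘ m) = vecMulVec x x + gramSum m := by
  simp [gramSum]

theorem posSemidef_gramSum (m : Multiset (Fin n → ℝ)) : (gramSum m).PosSemidef := by
  induction m using Multiset.induction with
  | empty => simpa [gramSum] using PosSemidef.zero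
  | cons x m ih => rw [gramSum_cons]; exact (posSemidef_vecMulVec_self x).add ih

theorem exists_gramSum_eq_smul {c : ℝ} (hc : 0 ≤ c) (m : Multiset (Fin n → ℝ)) :
    ∃ m' : Multiset (Fin n → ℝ), m'.card = m.card ∧ gramSum m' = c • gramSum m := by
  refine ⟨m.map fun x => √c • x, by simp, ?_⟩
  simp only [gramSum, Multiset.smul_sum, Multiset.map_map, Function.comp_def, vecMulVec_self_smul,
    Real.sq_sqrt hc]

open scoped MatrixOrder Matrix.Norms.L2Operator in
theorem exists_gramSum_eq {X : Matrix (Fin n) (Fin n) ℝ} (hX : X.PosSemidef) :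
    ∃ m : Multiset (Fin n → ℝ), X = gramSum m := by
  obtain ⟨B, rfl⟩ := CStarAlgebra.nonneg_iff_eq_star_mul_self.mp hX.nonneg
  refine ⟨Finset.univ.val.map fun i => B i, ?_⟩
  have : gramSum (Finset.univ.val.map fun i => B i) = ∑ i, vecMulVec (B i) (B i) := by
    rw [gramSum, Multiset.map_map]
    rfl
  rw [this]
  ext i j
  simp [Matrix.mul_apply, Matrix.sum_apply, vecMulVec_apply, star_apply]

theorem trace_mul_gramSum_pos (A : Matrix (Fin n) (Fin n) ℝ) (m : Multiset (Fin n → ℝ))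
    (hm : m ≠ 0) (h : ∀ x ∈ m, 0 < (A * vecMulVec x x).trace) : 0 < (A * gramSum m).trace := by
  induction m using Multiset.induction with
  | empty => exact absurd rfl hm
  | cons x m ih =>
    rw [gramSum_cons, mul_add, trace_add]
    have hx := h x (Multiset.mem_cons_self x m)
    rcases eq_or_ne m 0 with rfl | hm0
    · simpa [gramSum] using hx
    · have := ih hm0 fun y hy => h y (Multiset.mem_cons_of_mem hy)
      linarith

theorem exists_mem_trace_mul_nonpos {A : Matrix (Fin n) (Fin n) ℝ} {m : Multiset (Fin n → ℝ)}
    (hm : m ≠ 0) (h : (A * gramSum m).trace ≤ 0) : ∃ x ∈ m, (A * vecMulVec x x).trace ≤ 0 := by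
  by_contra! hc
  exact absurd (trace_mul_gramSum_pos A m hm hc) h.not_gt

/-- Two rank-one terms whose values under `A` have opposite signs can be rotated so that the first
value vanishes. -/
theorem exists_rotation_trace_mul_eq_zero (A : Matrix (Fin n) (Fin n) ℝ) (x y : Fin n → ℝ)
    (hx : (A * vecMulVec x x).trace ≤ 0) (hy : 0 ≤ (A * vecMulVec y y).trace) :
    ∃ u v : Fin n → ℝ, vecMulVec u u + vecMulVec v v = vecMulVec x x + vecMulVec y y ∧
      (A * vecMulVec u u).trace = 0 := by
  set f : ℝ → Fin n → ℝ := fun θ => Real.cos θ • x + Real.sin θ • y with hf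
  have hfc : Continuous f := by fun_prop
  have hcont : Continuous fun θ => (A * vecMulVec (f θ) (f θ)).trace :=
    (continuous_const.matrix_mul (continuous_vecMulVec_self.comp hfc)).matrix_trace
  obtain ⟨θ, -, hθ⟩ := intermediate_value_Icc (Real.pi_div_two_pos.le) hcont.continuousOn
    (show (0 : ℝ) ∈ Set.Icc _ _ by simpa [hf] using ⟨hx, hy⟩)
  refine ⟨f θ, -Real.sin θ • x + Real.cos θ • y, ?_, hθ⟩
  ext i j
  simp only [hf, vecMulVec_apply, Matrix.add_apply, Pi.add_apply, Pi.smul_apply, smul_eq_mul]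
  linear_combination (x i * x j + y i * y j) * Real.sin_sq_add_cos_sq θ

/-- One step of the Sturm–Zhang rank-one decomposition. -/
theorem exists_vecMulVec_add_gramSum (A : Matrix (Fin n) (Fin n) ℝ) (m : Multiset (Fin n → ℝ))
    (hm : m ≠ 0) (h : (A * gramSum m).trace = 0) :
    ∃ (y : Fin n → ℝ) (m' : Multiset (Fin n → ℝ)), m'.card < m.card ∧
      gramSum m = vecMulVec y y + gramSum m' ∧ (A * vecMulVec y y).trace = 0 := by
  obtain ⟨x, hxm, hx⟩ := exists_mem_trace_mul_nonpos hm h.le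
  obtain ⟨y, hym, hy⟩ := exists_mem_trace_mul_nonpos (A := -A) hm (by simp [h])
  rw [neg_mul, trace_neg, neg_nonpos] at hy
  obtain ⟨m₁, rfl⟩ := Multiset.exists_cons_of_mem hxm
  rcases Multiset.mem_cons.mp hym with rfl | hym
  · exact ⟨y, m₁, by simp, gramSum_cons y m₁, le_antisymm hx hy⟩
  · obtain ⟨m₂, rfl⟩ := Multiset.exists_cons_of_mem hym
    obtain ⟨u, v, huv, hu⟩ := exists_rotation_trace_mul_eq_zero A x y hx hy
    refine ⟨u, v ::ₘ m₂, by simp, ?_, hu⟩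
    simp only [gramSum_cons]
    rw [← add_assoc, ← add_assoc, huv]

theorem smul_mem_Jplus {𝒜 : Set (Matrix (Fin n) (Fin n) ℝ)} {c : ℝ} (hc : 0 ≤ c)
    {X : Matrix (Fin n) (Fin n) ℝ} (hX : X ∈ Jplus 𝒜) : c • X ∈ Jplus 𝒜 := by
  refine ⟨hX.1.smul hc, fun A hA => ?_⟩
  rw [Matrix.mul_smul, trace_smul, smul_eq_mul]
  exact mul_nonneg hc (hX.2 A hA)

theorem convex_Jplus (𝒜 : Set (Matrix (Fin n) (Fin n) ℝ)) : Convex ℝ (Jplus 𝒜) := by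
  intro X hX Y hY a b ha hb _
  refine ⟨(hX.1.smul ha).add (hY.1.smul hb), fun A hA => ?_⟩
  rw [mul_add, trace_add]
  exact add_nonneg ((smul_mem_Jplus ha hX).2 A hA) ((smul_mem_Jplus hb hY).2 A hA)

theorem smul_mem_rankOne_inter_Jplus (𝒜 : Set (Matrix (Fin n) (Fin n) ℝ)) :
    ∀ c : ℝ, 0 ≤ c → ∀ X ∈ {X | ∃ x : Fin n → ℝ, X = vecMulVec x x} ∩ Jplus 𝒜,
      c • X ∈ {X | ∃ x : Fin n → ℝ, X = vecMulVec x x} ∩ Jplus 𝒜 := by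
  rintro c hc _ ⟨⟨x, rfl⟩, hX⟩
  exact ⟨exists_vecMulVec_self_eq_smul hc x, smul_mem_Jplus hc hX⟩

/-- A uniform bound on the number of rank-one terms, by Carathéodory's theorem. -/
theorem exists_sum_vecMulVec_of_mem_convexHull (𝒜 : Set (Matrix (Fin n) (Fin n) ℝ))
    {X : Matrix (Fin n) (Fin n) ℝ}
    (hX : X ∈ convexHull ℝ ({X | ∃ x : Fin n → ℝ, X = vecMulVec x x} ∩ Jplus 𝒜)) :
    ∃ v : Fin (Module.finrank ℝ (Matrix (Fin n) (Fin n) ℝ) + 1) → Fin n → ℝ,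
      ∑ i, vecMulVec (v i) (v i) = X ∧ ∀ i, vecMulVec (v i) (v i) ∈ Jplus 𝒜 := by
  obtain ⟨ι, _, z, w, hz, hind, hw, -, rfl⟩ := eq_pos_convex_span_of_mem_convexHull hX
  have hmem : ∀ i, w i • z i ∈ {X | ∃ x : Fin n → ℝ, X = vecMulVec x x} ∩ Jplus 𝒜 := fun i =>
    smul_mem_rankOne_inter_Jplus 𝒜 _ (hw i).le _ (hz ⟨i, rfl⟩)
  choose v hv using fun i => (hmem i).1
  have hcard : Fintype.card ι ≤ Fintype.card
      (Fin (Module.finrank ℝ (Matrix (Fin n) (Fin n) ℝ) + 1)) := by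
    rw [Fintype.card_fin]
    exact hind.card_le_finrank_succ.trans
      (Nat.succ_le_succ (Submodule.finrank_le _))
  obtain ⟨e⟩ := Function.Embedding.nonempty_of_card_le hcard
  refine ⟨Function.extend e v 0, ?_, fun j => ?_⟩
  · refine (Fintype.sum_of_injective e e.injective _ _ (fun j hj => ?_) fun i => ?_).symm
    · rw [Function.extend_apply' _ _ _ (by simpa using hj)]
      simp
    · rw [e.injective.extend_apply, hv i]
  · by_cases hj : ∃ i, e i = j
    · obtain ⟨i, rfl⟩ := hj
      rw [e.injective.extend_apply, ← hv i]
      exact (hmem i).2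
    · rw [Function.extend_apply' _ _ _ hj]
      exact ⟨posSemidef_vecMulVec_self _, by simp⟩

/-- Compactness: membership in `J_+` of a family, decomposed into rank-one terms, may be checked on
its finite subfamilies. -/
theorem mem_convexHull_of_forall_finset (𝒜 : Set (Matrix (Fin n) (Fin n) ℝ))
    (X : Matrix (Fin n) (Fin n) ℝ)
    (h : ∀ B : Finset (Matrix (Fin n) (Fin n) ℝ), (B : Set _) ⊆ 𝒜 →
      X ∈ convexHull ℝ ({X | ∃ x : Fin n → ℝ, X = vecMulVec x x} ∩ Jplus (B : Set _))) :
    X ∈ convexHull ℝ ({X | ∃ x : Fin n → ℝ, X = vecMulVec x x} ∩ Jplus 𝒜) := by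
  classical
  set N := Module.finrank ℝ (Matrix (Fin n) (Fin n) ℝ) + 1
  set K : Set (Fin N → Fin n → ℝ) := {v | ∑ i, vecMulVec (v i) (v i) = X} with hK
  have hcv : ∀ i : Fin N, Continuous fun v : Fin N → Fin n → ℝ => vecMulVec (v i) (v i) :=
    fun i => continuous_vecMulVec_self.comp (continuous_apply i)
  have hKclosed : IsClosed K :=
    isClosed_eq (continuous_finsetSum _ fun i _ => hcv i) continuous_const
  have hKbdd : K ⊆ Set.pi Set.univ fun _ => Set.pi Set.univ fun j =>
      Set.Icc (-√(X j j)) (√(X j j)) := by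
    intro v hv i _ j _
    rw [hK, Set.mem_ofPred_eq] at hv
    rw [Set.mem_Icc, ← abs_le]
    apply Real.abs_le_sqrt
    rw [← hv, Matrix.sum_apply]
    simp only [vecMulVec_apply, ← sq]
    exact Finset.single_le_sum (f := fun i => v i j ^ 2) (fun _ _ => sq_nonneg _)
      (Finset.mem_univ i)
  have hKcomp : IsCompact K := IsCompact.of_isClosed_subset
    (isCompact_univ_pi fun _ => isCompact_univ_pi fun _ => isCompact_Icc) hKclosed hKbdd
  obtain ⟨v, hvK, hv⟩ := hKcomp.inter_iInter_nonempty
    (fun A : 𝒜 => {v | ∀ i, 0 ≤ (A.1 * vecMulVec (v i) (v i)).trace})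
    (fun A => by
      simp only [Set.ofPred_forall]
      exact isClosed_iInter fun i => isClosed_le continuous_const
        (continuous_const.matrix_mul (hcv i)).matrix_trace)
    (fun u => by
      obtain ⟨v, hv, hvJ⟩ := exists_sum_vecMulVec_of_mem_convexHull _
        (h (u.image Subtype.val) (by simp))
      refine ⟨v, hv, ?_⟩
      simp only [Set.mem_iInter, Set.mem_ofPred_eq]
      exact fun A hA i => (hvJ i).2 A.1 (by simpa using hA))
  have hvJ : ∀ i, vecMulVec (v i) (v i) ∈ Jplus 𝒜 := fun i =>
    ⟨posSemidef_vecMulVec_self _, fun A hA => Set.mem_iInter.mp hv ⟨A, hA⟩ i⟩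
  rw [hK, Set.mem_ofPred_eq] at hvK
  rw [← hvK]
  refine Finset.sum_induction _
    (· ∈ convexHull ℝ ({X | ∃ x : Fin n → ℝ, X = vecMulVec x x} ∩ Jplus 𝒜))
    (fun _ _ => add_mem_convexHull_of_cone (smul_mem_rankOne_inter_Jplus 𝒜))
    (subset_convexHull ℝ _ ⟨⟨0, by simp⟩, PosSemidef.zero, by simp⟩)
    fun i _ => subset_convexHull ℝ _ ⟨⟨v i, rfl⟩, hvJ i⟩

/-- Under the NIQC condition on a face `F`, a nonzero `gramSum` in `F` can be split off a rank-one
term so that both parts satisfy the active constraints. -/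
theorem exists_split_of_niqc (B : Finset (Matrix (Fin n) (Fin n) ℝ))
    (F : Set (Matrix (Fin n) (Fin n) ℝ))
    (hFface : ∀ X Y : Matrix (Fin n) (Fin n) ℝ, X.PosSemidef → Y.PosSemidef →
      X + Y ∈ F → X ∈ F ∧ Y ∈ F)
    (hNIQC : ∀ A ∈ B, ∀ A' ∈ B,
      (∀ X ∈ F, (A * X).trace = 0 → 0 ≤ (A' * X).trace) ∨
      (∀ X ∈ F, 0 ≤ (A' * X).trace → 0 ≤ (A * X).trace))
    (m : Multiset (Fin n → ℝ)) (hm : m ≠ 0) (hmF : gramSum m ∈ F) :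
    ∃ (y : Fin n → ℝ) (m' : Multiset (Fin n → ℝ)), m'.card < m.card ∧
      gramSum m = vecMulVec y y + gramSum m' ∧
      ∀ A ∈ B, (A * gramSum m).trace = 0 →
        (A * vecMulVec y y).trace = 0 ∧ (A * gramSum m').trace = 0 := by
  classical
  rcases (B.filter fun A => (A * gramSum m).trace = 0).eq_empty_or_nonempty with hB | hB
  · obtain ⟨y, hy⟩ := Multiset.exists_mem_of_ne_zero hm
    obtain ⟨m', rfl⟩ := Multiset.exists_cons_of_mem hy
    exact ⟨y, m', by simp, gramSum_cons y m', fun A hA h0 =>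
      absurd h0 (Finset.filter_eq_empty_iff.mp hB hA)⟩
  · obtain ⟨A, hA, hmin⟩ := Finset.exists_minimalFor
      (fun A => {X | X ∈ F ∧ 0 ≤ (A * X).trace}) _ hB
    rw [Finset.mem_filter] at hA
    obtain ⟨y, m', hcard, hsum, hy⟩ := exists_vecMulVec_add_gramSum A m hm hA.2
    refine ⟨y, m', hcard, hsum, fun A' hA' h0 => ?_⟩
    obtain ⟨hyF, hF'⟩ := hFface _ _ (posSemidef_vecMulVec_self y) (posSemidef_gramSum m')
      (hsum ▸ hmF)
    have hadd : ∀ C : Matrix (Fin n) (Fin n) ℝ, (C * gramSum m).trace =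
        (C * vecMulVec y y).trace + (C * gramSum m').trace := fun C => by
      rw [hsum, mul_add, trace_add]
    have h0' : (A * gramSum m').trace = 0 := by linarith [hadd A, hA.2]
    have key : ∀ Y ∈ F, (A * Y).trace = 0 → 0 ≤ (A' * Y).trace := by
      rcases hNIQC A hA.1 A' hA' with h | h
      · exact h
      · intro Y hY hY0
        exact (hmin (j := A') (by simp [hA', h0]) (fun Z hZ => ⟨hZ.1, h Z hZ.1 hZ.2⟩)
          (⟨hY, hY0.ge⟩ : Y ∈ {X | X ∈ F ∧ 0 ≤ (A * X).trace})).2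
    have h1 := key _ hyF hy
    have h2 := key _ hF' h0'
    have h3 := hadd A'
    constructor <;> linarith

open scoped Classical in
theorem gramSum_mem_convexHull_of_niqc (B : Finset (Matrix (Fin n) (Fin n) ℝ))
    (F : Set (Matrix (Fin n) (Fin n) ℝ)) (hFconv : Convex ℝ F)
    (hFcone : ∀ (c : ℝ), 0 ≤ c → ∀ X ∈ F, c • X ∈ F)
    (hFface : ∀ X Y : Matrix (Fin n) (Fin n) ℝ, X.PosSemidef → Y.PosSemidef →
      X + Y ∈ F → X ∈ F ∧ Y ∈ F)
    (hNIQC : ∀ A ∈ B, ∀ A' ∈ B,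
      (∀ X ∈ F, (A * X).trace = 0 → 0 ≤ (A' * X).trace) ∨
      (∀ X ∈ F, 0 ≤ (A' * X).trace → 0 ≤ (A * X).trace))
    (m : Multiset (Fin n → ℝ)) (hmF : gramSum m ∈ F)
    (hmB : ∀ A ∈ B, 0 ≤ (A * gramSum m).trace) :
    gramSum m ∈
      convexHull ℝ ({X | ∃ x : Fin n → ℝ, X = vecMulVec x x} ∩ Jplus (B : Set _)) := by
  set S : Set (Matrix (Fin n) (Fin n) ℝ) :=
    {X | ∃ x : Fin n → ℝ, X = vecMulVec x x} ∩ Jplus (B : Set _)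
  have hScone : ∀ c : ℝ, 0 ≤ c → ∀ X ∈ S, c • X ∈ S := smul_mem_rankOne_inter_Jplus _
  have hFadd : ∀ X ∈ F, ∀ Y ∈ F, X + Y ∈ F := fun X hX Y hY => by
    have := hFcone 2 zero_le_two _ (hFconv hX hY (by norm_num : (0 : ℝ) ≤ 1 / 2)
      (by norm_num : (0 : ℝ) ≤ 1 / 2) (by norm_num))
    simpa [smul_smul] using this
  induction hN : m.card + (B.filter fun A => (A * gramSum m).trace ≠ 0).card
    using Nat.strong_induction_on generalizing m with
  | _ N ih =>
  subst hN
  rcases eq_or_ne m 0 with rfl | hm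
  · exact subset_convexHull ℝ _ ⟨⟨0, by simp [gramSum]⟩, posSemidef_gramSum 0, hmB⟩
  obtain ⟨y, m', hcard, hsum, hact⟩ := exists_split_of_niqc B F hFface hNIQC m hm hmF
  obtain ⟨hyF, hF'⟩ := hFface _ _ (posSemidef_vecMulVec_self y) (posSemidef_gramSum m')
    (hsum ▸ hmF)
  have hstep : ∀ D ∈ F, (∀ s : ℝ, 0 ≤ s → ∃ m₁ : Multiset (Fin n → ℝ), m₁.card ≤ m.card ∧
      gramSum m₁ = gramSum m + s • D) →
      (∀ A ∈ B, (A * gramSum m).trace = 0 → (A * D).trace = 0) →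
      ((∀ A ∈ B, 0 ≤ (A * D).trace) → D ∈ convexHull ℝ S) →
      ∃ α s : ℝ, 0 ≤ α ∧ 0 < s ∧ α • gramSum m + s • D ∈ convexHull ℝ S := by
    intro D hDF hDm hD0 hDS
    rcases exists_pos_step_card_filter_lt B (fun A => (A * gramSum m).trace)
      (fun A => (A * D).trace) hmB hD0 with h | ⟨s, hs, hfeas, hlt⟩
    · exact ⟨0, 1, le_rfl, one_pos, by simpa using hDS h⟩
    · obtain ⟨m₁, hm₁, hsum₁⟩ := hDm s hs.le
      have htr : ∀ A : Matrix (Fin n) (Fin n) ℝ, (A * gramSum m₁).trace =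
          (A * gramSum m).trace + s * (A * D).trace := fun A => by
        rw [hsum₁, mul_add, trace_add, Matrix.mul_smul, trace_smul, smul_eq_mul]
      refine ⟨1, s, zero_le_one, hs, ?_⟩
      rw [one_smul, ← hsum₁]
      refine ih _ ?_ m₁ ?_ ?_ rfl
      · simp only [htr]
        exact add_lt_add_of_le_of_lt hm₁ hlt
      · rw [hsum₁]
        exact hFadd _ hmF _ (hFcone s hs.le _ hDF)
      · intro A hA
        rw [htr]
        exact hfeas A hA
  obtain ⟨α, s, hα, hs, hy⟩ := hstep (vecMulVec y y) hyF
    (fun s hs => by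
      obtain ⟨z, hz⟩ := exists_vecMulVec_self_eq_smul (add_nonneg zero_le_one hs) y
      refine ⟨z ::ₘ m', by simpa using hcard, ?_⟩
      rw [gramSum_cons, ← hz, hsum, add_smul, one_smul]
      abel)
    (fun A hA h0 => (hact A hA h0).1)
    (fun h => subset_convexHull ℝ _ ⟨⟨y, rfl⟩, posSemidef_vecMulVec_self y, h⟩)
  obtain ⟨β, t, hβ, ht, hm'⟩ := hstep (gramSum m') hF'
    (fun s hs => by
      obtain ⟨m₂, hcard₂, hm₂⟩ := exists_gramSum_eq_smul (add_nonneg zero_le_one hs) m'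
      refine ⟨y ::ₘ m₂, by simpa [hcard₂] using hcard, ?_⟩
      rw [gramSum_cons, hm₂, hsum, add_smul, one_smul]
      abel)
    (fun A hA h0 => (hact A hA h0).2)
    (fun h => by
      refine ih _ ?_ m' hF' h rfl
      refine add_lt_add_of_lt_of_le hcard (Finset.card_le_card fun A hA => ?_)
      simp only [Finset.mem_filter] at hA ⊢
      exact ⟨hA.1, fun h0 => hA.2 (hact A hA.1 h0).2⟩)
  have hc : 0 < t * α + s * β + s * t := by positivity
  have hcomb := smul_mem_convexHull_of_cone hScone (inv_nonneg.mpr hc.le)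
    (add_mem_convexHull_of_cone hScone (smul_mem_convexHull_of_cone hScone ht.le hy)
      (smul_mem_convexHull_of_cone hScone hs.le hm'))
  have heq : t • (α • gramSum m + s • vecMulVec y y) + s • (β • gramSum m + t • gramSum m') =
      (t * α + s * β + s * t) • gramSum m := by
    have : gramSum m' = gramSum m - vecMulVec y y := by rw [hsum]; abel
    rw [this]
    module
  rwa [heq, inv_smul_smul₀ hc.ne'] at hcomb

end RankOne

/-- Theorem 4.1, [ARIMA2024, Theorem 1.5]: the homogenized NIQC
condition on a face `F` of `S^n_+` implies that `J_+(𝒜)` is ROG. -/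
theorem stmt_6 (n : ℕ) (𝒜 : Set (Matrix (Fin n) (Fin n) ℝ))
    (h𝒜sym : ∀ A ∈ 𝒜, A.IsSymm)
    (F : Set (Matrix (Fin n) (Fin n) ℝ))
    (hFsub : F ⊆ {X | X.PosSemidef}) (hFconv : Convex ℝ F)
    (hFcone : ∀ (c : ℝ), 0 ≤ c → ∀ X ∈ F, c • X ∈ F)
    (hFface : ∀ X Y : Matrix (Fin n) (Fin n) ℝ, X.PosSemidef → Y.PosSemidef →
      X + Y ∈ F → X ∈ F ∧ Y ∈ F)
    (hJF : Jplus 𝒜 ⊆ F)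
    (hNIQC : ∀ A ∈ 𝒜, ∀ A' ∈ 𝒜,
      (F ∩ {X | X.PosSemidef ∧ (A * X).trace = 0} ⊆
        F ∩ {X | X.PosSemidef ∧ 0 ≤ (A' * X).trace}) ∨
      (F ∩ {X | X.PosSemidef ∧ 0 ≤ (A' * X).trace} ⊆
        F ∩ {X | X.PosSemidef ∧ 0 ≤ (A * X).trace})) :
    Jplus 𝒜 = convexHull ℝ ({X | ∃ x : Fin n → ℝ, X = vecMulVec x x} ∩ Jplus 𝒜) := by
  refine Set.Subset.antisymm (fun X hX => ?_)
    (convexHull_min Set.inter_subset_right (convex_Jplus 𝒜))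
  refine mem_convexHull_of_forall_finset 𝒜 X fun B hB => ?_
  obtain ⟨m, rfl⟩ := exists_gramSum_eq hX.1
  refine gramSum_mem_convexHull_of_niqc B F hFconv hFcone hFface (fun A hA A' hA' => ?_) m
    (hJF hX) fun A hA => hX.2 A (hB hA)
  rcases hNIQC A (hB hA) A' (hB hA') with h | h
  · exact Or.inl fun Y hY hY0 => (h ⟨hY, hFsub hY, hY0⟩).2.2
  · exact Or.inr fun Y hY hY0 => (h ⟨hY, hFsub hY, hY0⟩).2.2
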